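/- For any two-sided strategy-proof randomized matching mechanism f, there exists a randomized matching mechanism g that is two-sided strategy-proof and anonymous and satisfies max_{≻∈P} V(g(≻),≻) ≤ max_{≻∈P} V(f(≻),≻), where V(r,≻) denotes the stability violation of r at profile ≻. -/

import Mathlib

/-!
The mechanism `g` is the symmetrization of `f`: `g p s c` is the average, over all pairs of
permutations `(πS, πC)`, of `f (relabel πS πC p) (πS s) (πC c)`.

Each relabelled copy `relabeled f x` of `f` inherits feasibility, strategy-proofness (a misreport
by one agent becomes, after relabelling, a misreport by the renamed agent), and its violation at
`p` equals that of `f` at the relabelled profile. Feasibility and strategy-proofness are systems of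
linear inequalities, so they pass to averages. The violation is convex in the matching, so the
violation of the average is at most the average of the violations, each of which is bounded by
the worst case of `f`. Anonymity holds because relabellings compose, so that relabelling the
input only reindexes the average.
-/

open Finset

/-- A preference profile: each student `s` has a ranking `p.1 s : Equiv.Perm (Fin m)`
(where `p.1 s c` is the rank student `s` gives to school `c`, lower rank = more preferred),
and each school `c` has a ranking `p.2 c` of the students (lower rank = more preferred). -/
abbrev Profile (n m : ℕ) :=
  (Fin n → Equiv.Perm (Fin m)) × (Fin m → Equiv.Perm (Fin n))

/-- A randomized matching: nonnegative entries, and (accounting for the implicit `∅`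
row/column each summing to one) every row and column sums to at most one. -/
def IsRandMatching {n m : ℕ} (r : Fin n → Fin m → ℝ) : Prop :=
  (∀ s c, 0 ≤ r s c) ∧ (∀ s, ∑ c, r s c ≤ 1) ∧ (∀ c, ∑ s, r s c ≤ 1)

/-- Stability violation of a randomized matching `r` at profile `p`. -/
def violation {n m : ℕ} (p : Profile n m) (r : Fin n → Fin m → ℝ) : ℝ :=
  ∑ s, ∑ c,
    max (1 - r s c
      - ∑ c' ∈ univ.filter (fun c' => p.1 s c' < p.1 s c), r s c'
      - ∑ s' ∈ univ.filter (fun s' => p.2 c s' < p.2 c s), r s' c) 0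

/-- Two-sided strategy-proofness of a randomized matching mechanism. -/
def TwoSidedSP {n m : ℕ} (g : Profile n m → Fin n → Fin m → ℝ) : Prop :=
  (∀ p : Profile n m, ∀ s : Fin n, ∀ q : Equiv.Perm (Fin m), ∀ c : Fin m,
    ∑ c' ∈ univ.filter (fun c' => p.1 s c' ≤ p.1 s c),
        g (Function.update p.1 s q, p.2) s c'
      ≤ ∑ c' ∈ univ.filter (fun c' => p.1 s c' ≤ p.1 s c), g p s c') ∧
  (∀ p : Profile n m, ∀ c : Fin m, ∀ q : Equiv.Perm (Fin n), ∀ s : Fin n,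
    ∑ s' ∈ univ.filter (fun s' => p.2 c s' ≤ p.2 c s),
        g (p.1, Function.update p.2 c q) s' c
      ≤ ∑ s' ∈ univ.filter (fun s' => p.2 c s' ≤ p.2 c s), g p s' c)

/-- The relabelled profile `≻^π`: student `πS s` gets student `s`'s old preference with
schools renamed by `πC`, and school `πC c` gets school `c`'s old preference with students
renamed by `πS`. -/
def relabel {n m : ℕ} (πS : Equiv.Perm (Fin n)) (πC : Equiv.Perm (Fin m))
    (p : Profile n m) : Profile n m :=
  (fun i => πC.symm.trans (p.1 (πS.symm i)),
   fun j => πS.symm.trans (p.2 (πC.symm j)))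

/-- Anonymity of a mechanism. -/
def Anonymous {n m : ℕ} (g : Profile n m → Fin n → Fin m → ℝ) : Prop :=
  ∀ p : Profile n m, ∀ πS : Equiv.Perm (Fin n), ∀ πC : Equiv.Perm (Fin m), ∀ s c,
    g p s c = g (relabel πS πC p) (πS s) (πC c)

/-- The copy of `f` obtained by renaming the agents with `x = (πS, πC)`, running `f`, and undoing
the renaming. -/
def relabeled {n m : ℕ} (f : Profile n m → Fin n → Fin m → ℝ)
    (x : Equiv.Perm (Fin n) × Equiv.Perm (Fin m)) : Profile n m → Fin n → Fin m → ℝ :=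
  fun p s c => f (relabel x.1 x.2 p) (x.1 s) (x.2 c)

/-- The uniform average of a finite family of mechanisms. -/
noncomputable def average {n m : ℕ} {ι : Type*} [Fintype ι]
    (h : ι → Profile n m → Fin n → Fin m → ℝ) : Profile n m → Fin n → Fin m → ℝ :=
  fun p s c => ∑ x, (Fintype.card ι : ℝ)⁻¹ * h x p s c

section Relabel

variable {n m : ℕ} (f : Profile n m → Fin n → Fin m → ℝ)
  (x : Equiv.Perm (Fin n) × Equiv.Perm (Fin m))

lemma sum_filter_comp_perm {k : ℕ} (e : Equiv.Perm (Fin k)) (P : Fin k → Prop) [DecidablePred P]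
    (u : Fin k → ℝ) :
    ∑ i ∈ univ.filter P, u (e i) = ∑ i ∈ univ.filter (fun i => P (e.symm i)), u i := by
  rw [sum_filter, sum_filter, ← Equiv.sum_comp e (fun i => if P (e.symm i) then u i else 0)]
  simp

lemma isRandMatching_relabeled (hf : ∀ p, IsRandMatching (f p)) (p : Profile n m) :
    IsRandMatching (relabeled f x p) := by
  obtain ⟨h0, h1, h2⟩ := hf (relabel x.1 x.2 p)
  refine ⟨fun s c => h0 _ _, fun s => ?_, fun c => ?_⟩
  · exact (Equiv.sum_comp x.2 (fun c => f (relabel x.1 x.2 p) (x.1 s) c)).trans_le (h1 _)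
  · exact (Equiv.sum_comp x.1 (fun s => f (relabel x.1 x.2 p) s (x.2 c))).trans_le (h2 _)

lemma relabel_update_left (p : Profile n m) (s : Fin n) (q : Equiv.Perm (Fin m)) :
    relabel x.1 x.2 (Function.update p.1 s q, p.2) =
      (Function.update (relabel x.1 x.2 p).1 (x.1 s) (x.2.symm.trans q),
        (relabel x.1 x.2 p).2) := by
  refine Prod.ext (funext fun i => ?_) rfl
  by_cases h : i = x.1 s
  · subst h; simp [relabel]
  · have h' : x.1.symm i ≠ s := fun e => h (by simp [← e])
    simp [relabel, Function.update_of_ne h, Function.update_of_ne h']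

lemma relabel_update_right (p : Profile n m) (c : Fin m) (q : Equiv.Perm (Fin n)) :
    relabel x.1 x.2 (p.1, Function.update p.2 c q) =
      ((relabel x.1 x.2 p).1,
        Function.update (relabel x.1 x.2 p).2 (x.2 c) (x.1.symm.trans q)) := by
  refine Prod.ext rfl (funext fun j => ?_)
  by_cases h : j = x.2 c
  · subst h; simp [relabel]
  · have h' : x.2.symm j ≠ c := fun e => h (by simp [← e])
    simp [relabel, Function.update_of_ne h, Function.update_of_ne h']

lemma twoSidedSP_relabeled (hsp : TwoSidedSP f) : TwoSidedSP (relabeled f x) := by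
  refine ⟨fun p s q c => ?_, fun p c q s => ?_⟩
  · have h := hsp.1 (relabel x.1 x.2 p) (x.1 s) (x.2.symm.trans q) (x.2 c)
    rw [← relabel_update_left] at h
    simp only [relabeled]
    rw [sum_filter_comp_perm x.2 _ (fun c' => f (relabel x.1 x.2 p) (x.1 s) c'),
      sum_filter_comp_perm x.2 _
        (fun c' => f (relabel x.1 x.2 (Function.update p.1 s q, p.2)) (x.1 s) c')]
    simpa [relabel] using h
  · have h := hsp.2 (relabel x.1 x.2 p) (x.2 c) (x.1.symm.trans q) (x.1 s)
    rw [← relabel_update_right] at h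
    simp only [relabeled]
    rw [sum_filter_comp_perm x.1 _ (fun s' => f (relabel x.1 x.2 p) s' (x.2 c)),
      sum_filter_comp_perm x.1 _
        (fun s' => f (relabel x.1 x.2 (p.1, Function.update p.2 c q)) s' (x.2 c))]
    simpa [relabel] using h

lemma violation_relabeled (p : Profile n m) :
    violation p (relabeled f x p) =
      violation (relabel x.1 x.2 p) (f (relabel x.1 x.2 p)) := by
  unfold violation
  refine Eq.trans (sum_congr rfl fun s _ => ?_) (Equiv.sum_comp x.1 _)
  refine Eq.trans (sum_congr rfl fun c _ => ?_) (Equiv.sum_comp x.2 _)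
  simp only [relabeled]
  rw [sum_filter_comp_perm x.2 _ (fun c' => f (relabel x.1 x.2 p) (x.1 s) c'),
    sum_filter_comp_perm x.1 _ (fun s' => f (relabel x.1 x.2 p) s' (x.2 c))]
  simp [relabel]

/-- Relabelling twice is relabelling by the product, so relabelling the input permutes the
family of relabelled copies. -/
lemma relabeled_relabel (p : Profile n m) (πS : Equiv.Perm (Fin n)) (πC : Equiv.Perm (Fin m))
    (s : Fin n) (c : Fin m) :
    relabeled f x (relabel πS πC p) (πS s) (πC c) = relabeled f (x * (πS, πC)) p s c := by
  have h : relabel x.1 x.2 (relabel πS πC p) = relabel (x.1 * πS) (x.2 * πC) p := rfl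
  simp [relabeled, h]

lemma anonymous_average_relabeled : Anonymous (average (relabeled f)) := by
  intro p πS πC s c
  simp only [average, relabeled_relabel]
  exact (Equiv.sum_comp (Equiv.mulRight (πS, πC))
    (fun x => (Fintype.card (Equiv.Perm (Fin n) × Equiv.Perm (Fin m)) : ℝ)⁻¹ *
      relabeled f x p s c)).symm

end Relabel

section Average

variable {n m : ℕ} {ι : Type*} [Fintype ι] (h : ι → Profile n m → Fin n → Fin m → ℝ)

lemma sum_average_student (p : Profile n m) (s : Fin n) (A : Finset (Fin m)) :
    ∑ c ∈ A, average h p s c = ∑ x, (Fintype.card ι : ℝ)⁻¹ * ∑ c ∈ A, h x p s c := by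
  simp only [average, mul_sum]
  exact sum_comm

lemma sum_average_school (p : Profile n m) (c : Fin m) (A : Finset (Fin n)) :
    ∑ s ∈ A, average h p s c = ∑ x, (Fintype.card ι : ℝ)⁻¹ * ∑ s ∈ A, h x p s c := by
  simp only [average, mul_sum]
  exact sum_comm

lemma sum_weight [Nonempty ι] (b : ℝ) : ∑ _x : ι, (Fintype.card ι : ℝ)⁻¹ * b = b := by
  simp

lemma sum_weight_mono {u v : ι → ℝ} (huv : ∀ x, u x ≤ v x) :
    ∑ x, (Fintype.card ι : ℝ)⁻¹ * u x ≤ ∑ x, (Fintype.card ι : ℝ)⁻¹ * v x :=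
  sum_le_sum fun x _ => mul_le_mul_of_nonneg_left (huv x) (by positivity)

lemma isRandMatching_average [Nonempty ι] (p : Profile n m)
    (hh : ∀ x, IsRandMatching (h x p)) : IsRandMatching (average h p) := by
  refine ⟨fun s c => sum_nonneg fun x _ => mul_nonneg (by positivity) ((hh x).1 s c),
    fun s => ?_, fun c => ?_⟩
  · rw [sum_average_student]
    exact (sum_weight_mono fun x => (hh x).2.1 s).trans_eq (sum_weight 1)
  · rw [sum_average_school]
    exact (sum_weight_mono fun x => (hh x).2.2 c).trans_eq (sum_weight 1)

lemma twoSidedSP_average (hh : ∀ x, TwoSidedSP (h x)) : TwoSidedSP (average h) := by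
  refine ⟨fun p s q c => ?_, fun p c q s => ?_⟩
  · rw [sum_average_student, sum_average_student]
    exact sum_weight_mono fun x => (hh x).1 p s q c
  · rw [sum_average_school, sum_average_school]
    exact sum_weight_mono fun x => (hh x).2 p c q s

/-- Convexity of the violation in the matching (Jensen's inequality for a uniform average). -/
lemma violation_average_le [Nonempty ι] (p : Profile n m) :
    violation p (average h p) ≤ ∑ x, (Fintype.card ι : ℝ)⁻¹ * violation p (h x p) := by
  simp only [violation, mul_sum]
  refine le_trans (sum_le_sum fun s _ => ?_) sum_comm.le
  refine le_trans (sum_le_sum fun c _ => ?_) sum_comm.le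
  refine max_le ?_ (sum_nonneg fun x _ => mul_nonneg (by positivity) (le_max_right _ _))
  refine le_trans (le_of_eq ?_) (sum_weight_mono fun x => le_max_left _ _)
  rw [sum_average_student, sum_average_school]
  simp only [mul_sub, sum_sub_distrib, sum_weight, average]

end Average

/-- Theorem 1 (worst-case): for any two-sided strategy-proof randomized matching
mechanism `f` there is a two-sided strategy-proof and anonymous randomized matching
mechanism `g` whose worst-case stability violation over profiles is no larger. -/
theorem anonymization_worst_case (n m : ℕ) (f : Profile n m → Fin n → Fin m → ℝ)
    (hf : ∀ p, IsRandMatching (f p)) (hsp : TwoSidedSP f) :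
    ∃ g : Profile n m → Fin n → Fin m → ℝ,
      (∀ p, IsRandMatching (g p)) ∧ TwoSidedSP g ∧ Anonymous g ∧
      (⨆ p : Profile n m, violation p (g p)) ≤ ⨆ p : Profile n m, violation p (f p) := by
  refine ⟨average (relabeled f),
    fun p => isRandMatching_average _ p fun x => isRandMatching_relabeled f x hf p,
    twoSidedSP_average _ fun x => twoSidedSP_relabeled f x hsp,
    anonymous_average_relabeled f, ciSup_le fun p => ?_⟩
  have hbdd : BddAbove (Set.range fun p : Profile n m => violation p (f p)) :=
    (Set.finite_range _).bddAbove
  calc violation p (average (relabeled f) p)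
      ≤ _ := violation_average_le (relabeled f) p
    _ ≤ _ := sum_weight_mono fun x =>
        (violation_relabeled f x p).trans_le (le_ciSup hbdd (relabel x.1 x.2 p))
    _ = _ := sum_weight _
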